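/- Let b ∈ ℝ^n be a unit vector with all entries nonzero, and let x be a unit eigenvector of W(b) corresponding to its smallest eigenvalue. Then for every v ∈ ℝ^n with vᵀ b = 0, the function t ↦ (smallest eigenvalue of W(b + t v)) is differentiable at t = 0 with derivative equal to 2 vᵀ W(x) b. -/

import Mathlib

open Matrix BigOperators

/-- The Cauchy matrix with entries `1/(λᵢ + λⱼ)`. -/
noncomputable def cauchyPsi (n : ℕ) (lam : Fin n → ℝ) : Matrix (Fin n) (Fin n) ℝ :=
  Matrix.of fun i j => 1 / (lam i + lam j)

/-- `W(b) = diag(b) Ψ diag(b)`. -/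
noncomputable def cauchyW (n : ℕ) (lam : Fin n → ℝ) (b : Fin n → ℝ) :
    Matrix (Fin n) (Fin n) ℝ :=
  Matrix.diagonal b * cauchyPsi n lam * Matrix.diagonal b

/-
The smallest eigenvalue of `W(b + t v)` is the minimum over unit vectors `y` of
`yᵀ W(b + t v) y = (b + t v)ᵀ W(y) (b + t v)`, whose derivative at `t = 0` is `2 vᵀ W(y) b`. By
the envelope theorem (Danskin) it suffices that `W(y) b` is the same for all unit minimizers `y`
at `t = 0`.

Let `μ ≥ 0` be the minimum at `t = 0`. If `μ = 0`, then `bᵀ W(y) b = yᵀ W(b) y = 0` forces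
`W(y) b = 0`, because `W(y)` is positive semidefinite. If `μ > 0`, the Lyapunov equation
`Λ W(b) + W(b) Λ = b bᵀ` with `Λ = diag(λ)` shows that `W(b)⁻¹ = W(d)` for `d = W(b)⁻¹ b`. Then
`diag(d) (μ⁻¹ - W(b)⁻¹) diag(d)` is positive semidefinite with negative off-diagonal entries, and
Perron's argument shows that its kernel is at most one-dimensional; hence `y = ± x`.
-/

open Filter Set Topology

section Envelope

lemma exists_mem_uIcc_hasDerivAt_eq_slope {g g' : ℝ → ℝ} (hg : ∀ t, HasDerivAt g (g' t) t)
    {a b : ℝ} (hab : a ≠ b) : ∃ s ∈ uIcc a b, g' s = slope g a b := by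
  wlog h : a < b generalizing a b
  · rw [uIcc_comm, slope_comm]
    exact this hab.symm (hab.symm.lt_of_le (not_lt.mp h))
  obtain ⟨s, hs, hslope⟩ := exists_hasDerivAt_eq_slope g g' h
    (fun t _ => (hg t).continuousAt.continuousWithinAt) fun t _ => hg t
  exact ⟨s, Icc_subset_uIcc (Ioo_subset_Icc_self hs), hslope.trans (slope_def_field g a b).symm⟩

lemma slope_mem_uIcc_of_sub_mem_Icc {l f u : ℝ → ℝ} {a b : ℝ}
    (h : f b - f a ∈ Icc (l b - l a) (u b - u a)) :
    slope f a b ∈ uIcc (slope l a b) (slope u a b) := by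
  simp only [slope_def_field, mem_uIcc]
  rcases le_total 0 (b - a) with hab | hab
  · exact .inl ⟨div_le_div_of_nonneg_right h.1 hab, div_le_div_of_nonneg_right h.2 hab⟩
  · exact .inr ⟨div_le_div_of_nonpos_of_le hab h.2, div_le_div_of_nonpos_of_le hab h.1⟩

variable {Y : Type*} [TopologicalSpace Y] {g g' : ℝ → Y → ℝ} {t₀ : ℝ}

lemma tendsto_slope_of_tendsto {l : Filter ℝ} {X : ℝ → Y} {y : Y}
    (hderiv : ∀ t y, HasDerivAt (g · y) (g' t y) t)
    (hg' : ContinuousAt (Function.uncurry g') (t₀, y))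
    (hl : l ≤ 𝓝[≠] t₀) (hX : Tendsto X l (𝓝 y)) :
    Tendsto (fun t => slope (g · (X t)) t₀ t) l (𝓝 (g' t₀ y)) := by
  have hmean : ∀ t, ∃ s ∈ uIcc t₀ t, t ≠ t₀ → g' s (X t) = slope (g · (X t)) t₀ t := fun t => by
    rcases eq_or_ne t t₀ with rfl | ht
    · exact ⟨t, left_mem_uIcc, fun h => absurd rfl h⟩
    · obtain ⟨s, hs, hslope⟩ := exists_mem_uIcc_hasDerivAt_eq_slope (hderiv · (X t)) ht.symm
      exact ⟨s, hs, fun _ => hslope⟩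
  choose σ hσ hslope using hmean
  have hid : Tendsto id l (𝓝 t₀) := hl.trans nhdsWithin_le_nhds
  have hσ_lim : Tendsto σ l (𝓝 t₀) :=
    tendsto_of_tendsto_of_tendsto_of_le_of_le
      (by simpa only [id, min_self] using (tendsto_const_nhds (x := t₀)).min hid)
      (by simpa only [id, max_self] using (tendsto_const_nhds (x := t₀)).max hid)
      (fun t => (hσ t).1) fun t => (hσ t).2
  refine (hg'.tendsto.comp (hσ_lim.prodMk_nhds hX)).congr' ?_
  filter_upwards [hl self_mem_nhdsWithin] with t ht using hslope t ht

theorem hasDerivAt_of_isLeast_image {K : Set Y} (hK : IsCompact K) {f : ℝ → ℝ} {D : ℝ}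
    (hderiv : ∀ t y, HasDerivAt (g · y) (g' t y) t)
    (hg : Continuous (Function.uncurry g)) (hg' : Continuous (Function.uncurry g'))
    (hf : ∀ t, IsLeast (g t '' K) (f t))
    (hD : ∀ y ∈ K, g t₀ y = f t₀ → g' t₀ y = D) :
    HasDerivAt f D t₀ := by
  choose X hXK hXf using fun t => (hf t).1
  have hmin : ∀ t, ∀ y ∈ K, f t ≤ g t y := fun t y hy => (hf t).2 (mem_image_of_mem _ hy)
  rw [hasDerivAt_iff_tendsto_slope, tendsto_iff_ultrafilter]
  intro U hU
  obtain ⟨y, hyK, hXy⟩ := hK.ultrafilter_le_nhds' (U.map X)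
    (Ultrafilter.mem_map.mpr (univ_mem' hXK))
  have hid : Tendsto id (U : Filter ℝ) (𝓝 t₀) := hU.trans nhdsWithin_le_nhds
  have hy : g t₀ y = f t₀ := by
    refine le_antisymm ?_ (hmin t₀ y hyK)
    rw [← hXf t₀]
    exact le_of_tendsto_of_tendsto' (hg.continuousAt.tendsto.comp (hid.prodMk_nhds hXy))
      (hg.continuousAt.tendsto.comp (hid.prodMk_nhds tendsto_const_nhds))
      fun t => (hXf t).trans_le (hmin t (X t₀) (hXK t₀))
  have hlower := hD y hyK hy ▸ tendsto_slope_of_tendsto hderiv hg'.continuousAt hU hXy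
  have hupper := hD _ (hXK t₀) (hXf t₀) ▸
    tendsto_slope_of_tendsto hderiv hg'.continuousAt hU (tendsto_const_nhds (x := X t₀))
  have hslope : ∀ t, slope f t₀ t ∈
      uIcc (slope (g · (X t)) t₀ t) (slope (g · (X t₀)) t₀ t) := fun t =>
    slope_mem_uIcc_of_sub_mem_Icc
      ⟨sub_le_sub (hXf t).le (hmin t₀ _ (hXK t)), sub_le_sub (hmin t _ (hXK t₀)) (hXf t₀).le⟩
  exact tendsto_of_tendsto_of_tendsto_of_le_of_le
    (by simpa using hlower.min hupper) (by simpa using hlower.max hupper)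
    (fun t => (hslope t).1) fun t => (hslope t).2

end Envelope

section Matrix

variable {ι : Type*}

lemma posDef_of_posSemidef_sub_smul_one [DecidableEq ι] {A : Matrix ι ι ℝ} {μ : ℝ} (hμ : 0 < μ)
    (h : (A - μ • (1 : Matrix ι ι ℝ)).PosSemidef) : A.PosDef := by
  simpa only [add_sub_cancel] using (PosDef.one.smul hμ).add_posSemidef h

variable [Fintype ι]

lemma isCompact_setOf_dotProduct_self_eq_one : IsCompact {y : ι → ℝ | y ⬝ᵥ y = 1} := by
  refine (isCompact_closedBall 0 1).of_isClosed_subset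
    (isClosed_eq (by fun_prop) continuous_const) fun y hy => ?_
  rw [mem_closedBall_zero_iff, pi_norm_le_iff_of_nonneg zero_le_one]
  intro i
  rw [Real.norm_eq_abs, ← sq_le_one_iff_abs_le_one, sq, ← mem_ofPred.mp hy]
  exact Finset.single_le_sum (f := fun i => y i * y i) (fun _ _ => mul_self_nonneg _)
    (Finset.mem_univ i)

lemma hasDerivAt_dotProduct_mulVec_line {M : Matrix ι ι ℝ} (hM : M.IsSymm) (b v : ι → ℝ) (t : ℝ) :
    HasDerivAt (fun t : ℝ => (b + t • v) ⬝ᵥ M *ᵥ (b + t • v))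
      (2 * (v ⬝ᵥ M *ᵥ (b + t • v))) t := by
  have hcomm : b ⬝ᵥ M *ᵥ v = v ⬝ᵥ M *ᵥ b := by
    rw [dotProduct_mulVec, ← mulVec_transpose, hM.eq, dotProduct_comm]
  have hexpand : ∀ t : ℝ, (b + t • v) ⬝ᵥ M *ᵥ (b + t • v) =
      b ⬝ᵥ M *ᵥ b + t * (2 * (v ⬝ᵥ M *ᵥ b)) + t ^ 2 * (v ⬝ᵥ M *ᵥ v) := fun t => by
    simp only [mulVec_add, mulVec_smul, add_dotProduct, dotProduct_add, smul_dotProduct,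
      dotProduct_smul, smul_eq_mul, hcomm]
    ring
  rw [funext hexpand]
  refine ((((hasDerivAt_id t).mul_const (2 * (v ⬝ᵥ M *ᵥ b))).const_add (b ⬝ᵥ M *ᵥ b)).add
    ((hasDerivAt_pow 2 t).mul_const (v ⬝ᵥ M *ᵥ v))).congr_deriv ?_
  simp only [mulVec_add, mulVec_smul, dotProduct_add, dotProduct_smul, smul_eq_mul]
  ring

lemma eq_zero_of_mulVec_eq_zero_of_apply_eq_zero {A : Matrix ι ι ℝ} (hA : A.PosSemidef)
    (hneg : ∀ i j, i ≠ j → A i j < 0) {y : ι → ℝ} (hy : A *ᵥ y = 0) {i : ι} (hi : y i = 0) :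
    y = 0 := by
  have habs : |y| ⬝ᵥ A *ᵥ |y| ≤ y ⬝ᵥ A *ᵥ y := by
    simp only [dotProduct, mulVec, Finset.mul_sum]
    refine Finset.sum_le_sum fun j _ => Finset.sum_le_sum fun k _ => ?_
    rcases eq_or_ne j k with rfl | hjk
    · simp only [Pi.abs_apply]
      linear_combination A j j * abs_mul_abs_self (y j)
    · have hle : y j * y k ≤ |y j| * |y k| := (le_abs_self _).trans (abs_mul _ _).le
      simp only [Pi.abs_apply]
      nlinarith [hneg j k hjk]
  have hnull : A *ᵥ |y| = 0 := by
    refine (hA.dotProduct_mulVec_zero_iff |y|).mp (le_antisymm ?_ (hA.dotProduct_mulVec_nonneg _))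
    simpa only [star_trivial, hy, dotProduct_zero] using habs
  have hrow : ∑ j, A i j * |y j| = 0 := congrFun hnull i
  have hterm : ∀ j ∈ Finset.univ, A i j * |y j| ≤ 0 := fun j _ => by
    rcases eq_or_ne i j with rfl | hij
    · simp [hi]
    · exact mul_nonpos_of_nonpos_of_nonneg (hneg i j hij).le (abs_nonneg _)
  funext j
  rcases eq_or_ne i j with rfl | hij
  · exact hi
  · have := (Finset.sum_eq_zero_iff_of_nonpos hterm).mp hrow j (Finset.mem_univ j)
    simpa [(hneg i j hij).ne] using this

lemma exists_eq_smul_of_mulVec_eq_zero {A : Matrix ι ι ℝ} (hA : A.PosSemidef)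
    (hneg : ∀ i j, i ≠ j → A i j < 0) {x y : ι → ℝ} (hx0 : x ≠ 0) (hx : A *ᵥ x = 0)
    (hy : A *ᵥ y = 0) : ∃ c : ℝ, y = c • x := by
  obtain ⟨i, hi⟩ := Function.ne_iff.mp hx0
  refine ⟨y i / x i, sub_eq_zero.mp
    (eq_zero_of_mulVec_eq_zero_of_apply_eq_zero hA hneg ?_ (i := i) ?_)⟩
  · rw [mulVec_sub, mulVec_smul, hx, hy, smul_zero, sub_zero]
  · simp [div_mul_cancel₀ _ hi]

lemma exists_eq_smul_of_mulVec_eq_zero_of_diagonal_conj {A : Matrix ι ι ℝ} (hA : A.PosSemidef)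
    {d : ι → ℝ} (hd : ∀ i, d i ≠ 0) (hneg : ∀ i j, i ≠ j → d i * A i j * d j < 0) {x y : ι → ℝ}
    (hx0 : x ≠ 0) (hx : A *ᵥ x = 0) (hy : A *ᵥ y = 0) : ∃ c : ℝ, y = c • x := by
  classical
  have hS : (diagonal d * A * diagonal d).PosSemidef := by
    simpa only [diagonal_conjTranspose, star_trivial] using
      hA.conjTranspose_mul_mul_same (diagonal d)
  have hS_neg : ∀ i j, i ≠ j → (diagonal d * A * diagonal d) i j < 0 := fun i j hij => by
    simpa only [mul_diagonal, diagonal_mul] using hneg i j hij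
  have hdiv : ∀ z, diagonal d *ᵥ (z / d) = z := fun z => funext fun i => by
    rw [mulVec_diagonal, Pi.div_apply, mul_div_cancel₀ _ (hd i)]
  have hS_ker : ∀ z, A *ᵥ z = 0 → (diagonal d * A * diagonal d) *ᵥ (z / d) = 0 := fun z hz => by
    rw [← mulVec_mulVec, hdiv, ← mulVec_mulVec, hz, mulVec_zero]
  have hxd : x / d ≠ 0 := fun h0 => hx0 <| by rw [← hdiv x, h0, mulVec_zero]
  obtain ⟨c, hc⟩ := exists_eq_smul_of_mulVec_eq_zero hS hS_neg hxd (hS_ker x hx) (hS_ker y hy)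
  exact ⟨c, by rw [← hdiv y, hc, mulVec_smul, hdiv]⟩

lemma posSemidef_of_lyapunov {A L : Matrix ι ι ℝ} (hL : L.PosDef) (hA : A.IsHermitian)
    (h : (L * A + A * L).PosSemidef) : A.PosSemidef := by
  classical
  refine hA.posSemidef_iff_eigenvalues_nonneg.mpr fun j => ?_
  set y : ι → ℝ := ⇑(hA.eigenvectorBasis j)
  have hAy : A *ᵥ y = hA.eigenvalues j • y := hA.mulVec_eigenvectorBasis j
  have hy : y ≠ 0 := fun h0 =>
    hA.eigenvectorBasis.orthonormal.ne_zero j (PiLp.ext (congrFun h0))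
  have hLy := hL.dotProduct_mulVec_pos hy
  have hnonneg := h.dotProduct_mulVec_nonneg y
  have hcomm : y ⬝ᵥ A *ᵥ L *ᵥ y = (A *ᵥ y) ⬝ᵥ L *ᵥ y := by
    rw [dotProduct_mulVec, ← mulVec_transpose, (isHermitian_iff_isSymm.mp hA).eq]
  rw [star_trivial] at hLy hnonneg
  rw [add_mulVec, dotProduct_add, ← mulVec_mulVec, ← mulVec_mulVec, hcomm, hAy, mulVec_smul,
    dotProduct_smul, smul_dotProduct, smul_eq_mul] at hnonneg
  exact nonneg_of_mul_nonneg_left (by linarith) hLy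

variable [DecidableEq ι] {A : Matrix ι ι ℝ} {μ : ℝ}

lemma dotProduct_sub_smul_one_mulVec (y : ι → ℝ) :
    y ⬝ᵥ (A - μ • (1 : Matrix ι ι ℝ)) *ᵥ y = y ⬝ᵥ A *ᵥ y - μ * (y ⬝ᵥ y) := by
  simp only [sub_mulVec, smul_mulVec, one_mulVec, dotProduct_sub, dotProduct_smul, smul_eq_mul]

lemma mulVec_eq_smul_of_posSemidef_sub (hA : (A - μ • (1 : Matrix ι ι ℝ)).PosSemidef)
    {y : ι → ℝ} (hy : y ⬝ᵥ A *ᵥ y = μ * (y ⬝ᵥ y)) : A *ᵥ y = μ • y := by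
  have hnull := (hA.dotProduct_mulVec_zero_iff y).mp (by
    rw [star_trivial, dotProduct_sub_smul_one_mulVec, hy, sub_self])
  rwa [sub_mulVec, smul_mulVec, one_mulVec, sub_eq_zero] at hnull

open scoped MatrixOrder in
lemma posSemidef_sub_smul_one_iff (hA : A.IsHermitian) :
    (A - μ • (1 : Matrix ι ι ℝ)).PosSemidef ↔ ∀ a ∈ spectrum ℝ A, μ ≤ a := by
  rw [← Algebra.algebraMap_eq_smul_one, ← Matrix.le_iff,
    algebraMap_le_iff_le_spectrum (a := A) hA]

lemma posSemidef_sub_sInf_spectrum (hA : A.IsHermitian) :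
    (A - sInf (spectrum ℝ A) • (1 : Matrix ι ι ℝ)).PosSemidef :=
  (posSemidef_sub_smul_one_iff hA).mpr fun _ ha =>
    csInf_le finite_real_spectrum.bddBelow ha

lemma exists_unit_mulVec_eq_sInf_spectrum_smul [Nonempty ι] (hA : A.IsHermitian) :
    ∃ y : ι → ℝ, y ⬝ᵥ y = 1 ∧ A *ᵥ y = sInf (spectrum ℝ A) • y := by
  have hrange := hA.spectrum_real_eq_range_eigenvalues
  obtain ⟨j, hj⟩ : sInf (spectrum ℝ A) ∈ range hA.eigenvalues :=
    hrange ▸ (hrange ▸ range_nonempty _ : (spectrum ℝ A).Nonempty).csInf_mem finite_real_spectrum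
  refine ⟨hA.eigenvectorBasis j, ?_, hj ▸ hA.mulVec_eigenvectorBasis j⟩
  have hnorm := hA.eigenvectorBasis.inner_eq_one j
  rwa [EuclideanSpace.inner_eq_star_dotProduct] at hnorm

lemma isLeast_sInf_spectrum [Nonempty ι] (hA : A.IsHermitian) :
    IsLeast ((fun y : ι → ℝ => y ⬝ᵥ A *ᵥ y) '' {y | y ⬝ᵥ y = 1}) (sInf (spectrum ℝ A)) := by
  constructor
  · obtain ⟨y, hy, hAy⟩ := exists_unit_mulVec_eq_sInf_spectrum_smul hA
    exact ⟨y, hy, by simp only [hAy, dotProduct_smul, hy, smul_eq_mul, mul_one]⟩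
  · rintro _ ⟨y, hy, rfl⟩
    have hnonneg := (posSemidef_sub_sInf_spectrum hA).dotProduct_mulVec_nonneg y
    rwa [star_trivial, dotProduct_sub_smul_one_mulVec, mem_ofPred.mp hy, mul_one,
      sub_nonneg] at hnonneg

lemma hasDerivAt_sInf_spectrum [Nonempty ι] {A : ℝ → Matrix ι ι ℝ} {q' : ℝ → (ι → ℝ) → ℝ}
    {t₀ D : ℝ} (hA : ∀ t, (A t).IsHermitian) (hcont : Continuous A)
    (hderiv : ∀ t y, HasDerivAt (fun s => y ⬝ᵥ A s *ᵥ y) (q' t y) t)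
    (hq' : Continuous (Function.uncurry q'))
    (hD : ∀ y, y ⬝ᵥ y = 1 → A t₀ *ᵥ y = sInf (spectrum ℝ (A t₀)) • y → q' t₀ y = D) :
    HasDerivAt (fun t => sInf (spectrum ℝ (A t))) D t₀ :=
  hasDerivAt_of_isLeast_image isCompact_setOf_dotProduct_self_eq_one hderiv
    (by unfold Function.uncurry; fun_prop) hq' (fun t => isLeast_sInf_spectrum (hA t))
    fun y hy hmin => hD y hy <|
      mulVec_eq_smul_of_posSemidef_sub (posSemidef_sub_sInf_spectrum (hA t₀)) <| by
        rw [hy, mul_one, hmin]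

open scoped MatrixOrder in
lemma posSemidef_inv_smul_one_sub_inv (hμ : 0 < μ)
    (h : (A - μ • (1 : Matrix ι ι ℝ)).PosSemidef) :
    (μ⁻¹ • (1 : Matrix ι ι ℝ) - A⁻¹).PosSemidef := by
  have hA := posDef_of_posSemidef_sub_smul_one hμ h
  rw [← Algebra.algebraMap_eq_smul_one, ← Matrix.le_iff]
  refine le_algebraMap_of_spectrum_le (fun a ha => ?_) hA.isHermitian.inv
  have hinv : a⁻¹ ∈ spectrum ℝ A := by
    obtain ⟨u, rfl⟩ := hA.isUnit
    exact spectrum.inv₀_mem_iff.mpr (coe_units_inv u ▸ ha)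
  exact inv_inv a ▸ inv_anti₀ hμ ((posSemidef_sub_smul_one_iff hA.isHermitian).mp h _ hinv)

end Matrix

section Cauchy

variable {n : ℕ} {lam : Fin n → ℝ}

lemma cauchyW_apply (b : Fin n → ℝ) (i j : Fin n) :
    cauchyW n lam b i j = b i * b j / (lam i + lam j) := by
  simp only [cauchyW, cauchyPsi, mul_diagonal, diagonal_mul, of_apply]
  ring

lemma isSymm_cauchyW (b : Fin n → ℝ) : (cauchyW n lam b).IsSymm :=
  IsSymm.ext fun i j => by rw [cauchyW_apply, cauchyW_apply, mul_comm (b j), add_comm (lam j)]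

lemma isHermitian_cauchyW (b : Fin n → ℝ) : (cauchyW n lam b).IsHermitian :=
  isHermitian_iff_isSymm.mpr (isSymm_cauchyW b)

@[fun_prop]
lemma continuous_cauchyW : Continuous (cauchyW n lam) := by
  unfold cauchyW
  fun_prop

lemma cauchyW_smul (c : ℝ) (b : Fin n → ℝ) : cauchyW n lam (c • b) = c ^ 2 • cauchyW n lam b := by
  ext i j
  simp only [cauchyW_apply, Pi.smul_apply, Matrix.smul_apply, smul_eq_mul]
  ring

lemma dotProduct_cauchyW_mulVec_comm (p q : Fin n → ℝ) :
    p ⬝ᵥ cauchyW n lam q *ᵥ p = q ⬝ᵥ cauchyW n lam p *ᵥ q := by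
  simp only [dotProduct, mulVec, cauchyW_apply, Finset.mul_sum]
  refine Finset.sum_congr rfl fun i _ => Finset.sum_congr rfl fun j _ => ?_
  ring

lemma lyapunov_cauchyW (hlam : ∀ i j, lam i + lam j ≠ 0) (b : Fin n → ℝ) :
    diagonal lam * cauchyW n lam b + cauchyW n lam b * diagonal lam = vecMulVec b b := by
  ext i j
  simp only [Matrix.add_apply, diagonal_mul, mul_diagonal, cauchyW_apply, vecMulVec_apply]
  field_simp [hlam i j]

lemma eq_cauchyW_of_lyapunov (hlam : ∀ i j, lam i + lam j ≠ 0) {A : Matrix (Fin n) (Fin n) ℝ}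
    {d : Fin n → ℝ} (h : diagonal lam * A + A * diagonal lam = vecMulVec d d) :
    A = cauchyW n lam d := by
  ext i j
  have hij : lam i * A i j + A i j * lam j = d i * d j := by
    simpa only [Matrix.add_apply, diagonal_mul, mul_diagonal, vecMulVec_apply]
      using congrFun (congrFun h i) j
  rw [cauchyW_apply, eq_div_iff (hlam i j), ← hij]
  ring

lemma inv_cauchyW (hlam : ∀ i j, lam i + lam j ≠ 0) {b : Fin n → ℝ}
    (hunit : IsUnit (cauchyW n lam b)) :
    (cauchyW n lam b)⁻¹ = cauchyW n lam ((cauchyW n lam b)⁻¹ *ᵥ b) := by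
  apply eq_cauchyW_of_lyapunov hlam
  have hlyap := lyapunov_cauchyW hlam b
  have hsymm : (cauchyW n lam b)ᵀ = cauchyW n lam b := isSymm_cauchyW b
  have hdet := (isUnit_iff_isUnit_det _).mp hunit
  generalize cauchyW n lam b = W at *
  calc diagonal lam * W⁻¹ + W⁻¹ * diagonal lam
      = W⁻¹ * (diagonal lam * W + W * diagonal lam) * W⁻¹ := by
        rw [Matrix.mul_add, Matrix.add_mul, ← Matrix.mul_assoc W⁻¹ W, nonsing_inv_mul _ hdet,
          Matrix.one_mul, Matrix.mul_assoc W⁻¹, mul_nonsing_inv_cancel_right _ _ hdet, add_comm]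
    _ = vecMulVec (W⁻¹ *ᵥ b) (W⁻¹ *ᵥ b) := by
        rw [hlyap, mul_vecMulVec, vecMulVec_mul, ← mulVec_transpose, transpose_nonsing_inv, hsymm]

lemma ne_zero_of_isUnit_cauchyW {b : Fin n → ℝ} (hunit : IsUnit (cauchyW n lam b)) (i : Fin n) :
    b i ≠ 0 := fun hi =>
  ((isUnit_iff_isUnit_det _).mp hunit).ne_zero <| det_eq_zero_of_row_eq_zero i fun j => by
    rw [cauchyW_apply, hi, zero_mul, zero_div]

lemma posSemidef_cauchyW (hpos : ∀ i, 0 < lam i) (b : Fin n → ℝ) :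
    (cauchyW n lam b).PosSemidef :=
  posSemidef_of_lyapunov (posDef_diagonal_iff.mpr hpos) (isHermitian_cauchyW b) <| by
    rw [lyapunov_cauchyW (fun i j => (add_pos (hpos i) (hpos j)).ne') b]
    exact posSemidef_vecMulVec_self_star b

lemma sInf_spectrum_cauchyW_nonneg (hpos : ∀ i, 0 < lam i) (b : Fin n → ℝ) :
    0 ≤ sInf (spectrum ℝ (cauchyW n lam b)) :=
  Real.sInf_nonneg fun _ ha =>
    (posSemidef_iff_isHermitian_and_spectrum_nonneg.mp (posSemidef_cauchyW hpos b)).2 ha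

lemma hasDerivAt_dotProduct_cauchyW_mulVec_line (b v y : Fin n → ℝ) (t : ℝ) :
    HasDerivAt (fun s : ℝ => y ⬝ᵥ cauchyW n lam (b + s • v) *ᵥ y)
      (2 * (v ⬝ᵥ cauchyW n lam y *ᵥ (b + t • v))) t := by
  simp only [dotProduct_cauchyW_mulVec_comm y]
  exact hasDerivAt_dotProduct_mulVec_line (isSymm_cauchyW y) b v t

lemma exists_eq_smul_of_cauchyW_mulVec_eq_smul (hpos : ∀ i, 0 < lam i) {b : Fin n → ℝ} {μ : ℝ}
    (hμ : 0 < μ) (h : (cauchyW n lam b - μ • (1 : Matrix (Fin n) (Fin n) ℝ)).PosSemidef)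
    {x y : Fin n → ℝ} (hx0 : x ≠ 0) (hx : cauchyW n lam b *ᵥ x = μ • x)
    (hy : cauchyW n lam b *ᵥ y = μ • y) : ∃ c : ℝ, y = c • x := by
  have hunit : IsUnit (cauchyW n lam b) := (posDef_of_posSemidef_sub_smul_one hμ h).isUnit
  obtain ⟨d, hd⟩ : ∃ d, (cauchyW n lam b)⁻¹ = cauchyW n lam d :=
    ⟨_, inv_cauchyW (fun i j => (add_pos (hpos i) (hpos j)).ne') hunit⟩
  have hd0 : ∀ i, d i ≠ 0 :=
    ne_zero_of_isUnit_cauchyW (hd ▸ isUnit_nonsing_inv_iff.mpr hunit)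
  have hneg : ∀ i j, i ≠ j →
      d i * (μ⁻¹ • 1 - (cauchyW n lam b)⁻¹ : Matrix (Fin n) (Fin n) ℝ) i j * d j < 0 :=
    fun i j hij => by
      have hentry : d i * (μ⁻¹ • 1 - (cauchyW n lam b)⁻¹ : Matrix (Fin n) (Fin n) ℝ) i j * d j =
          -(d i ^ 2 * d j ^ 2 / (lam i + lam j)) := by
        simp only [hd, Matrix.sub_apply, Matrix.smul_apply, one_apply_ne hij, cauchyW_apply,
          smul_zero]
        ring
      have := hd0 i
      have := hd0 j
      have := add_pos (hpos i) (hpos j)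
      rw [hentry, neg_lt_zero]
      positivity
  have hker : ∀ z, cauchyW n lam b *ᵥ z = μ • z →
      (μ⁻¹ • 1 - (cauchyW n lam b)⁻¹ : Matrix (Fin n) (Fin n) ℝ) *ᵥ z = 0 := fun z hz => by
    have hinv : (cauchyW n lam b)⁻¹ *ᵥ z = μ⁻¹ • z := by
      rw [eq_inv_smul_iff₀ hμ.ne', ← mulVec_smul, ← hz, mulVec_mulVec,
        nonsing_inv_mul _ ((isUnit_iff_isUnit_det _).mp hunit), one_mulVec]
    rw [sub_mulVec, smul_mulVec, one_mulVec, hinv, sub_self]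
  exact exists_eq_smul_of_mulVec_eq_zero_of_diagonal_conj (posSemidef_inv_smul_one_sub_inv hμ h)
    hd0 hneg hx0 (hker x hx) (hker y hy)

lemma cauchyW_mulVec_eq_of_unit_eigenvectors (hpos : ∀ i, 0 < lam i) {b : Fin n → ℝ} {μ : ℝ}
    (hμ : 0 ≤ μ) (h : (cauchyW n lam b - μ • (1 : Matrix (Fin n) (Fin n) ℝ)).PosSemidef)
    {x y : Fin n → ℝ} (hx1 : x ⬝ᵥ x = 1) (hx : cauchyW n lam b *ᵥ x = μ • x)
    (hy1 : y ⬝ᵥ y = 1) (hy : cauchyW n lam b *ᵥ y = μ • y) :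
    cauchyW n lam y *ᵥ b = cauchyW n lam x *ᵥ b := by
  rcases hμ.eq_or_lt with rfl | hμ
  · have hnull : ∀ z, cauchyW n lam b *ᵥ z = (0 : ℝ) • z → cauchyW n lam z *ᵥ b = 0 :=
      fun z hz => ((posSemidef_cauchyW hpos z).dotProduct_mulVec_zero_iff b).mp <| by
        rw [star_trivial, dotProduct_cauchyW_mulVec_comm, hz, zero_smul, dotProduct_zero]
    rw [hnull x hx, hnull y hy]
  · have hx0 : x ≠ 0 := by
      rintro rfl
      simp at hx1
    obtain ⟨c, rfl⟩ := exists_eq_smul_of_cauchyW_mulVec_eq_smul hpos hμ h hx0 hx hy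
    have hc : c ^ 2 = 1 := by
      simpa only [smul_dotProduct, dotProduct_smul, hx1, smul_eq_mul, mul_one, ← sq] using hy1
    rw [cauchyW_smul, hc, one_smul]

end Cauchy

theorem deriv_smallest_eigenvalue_general (n : ℕ) (lam : Fin n → ℝ) (hpos : ∀ i, 0 < lam i)
    (b x : Fin n → ℝ) (hx_unit : ∑ i, x i ^ 2 = 1)
    (hx_eig : cauchyW n lam b *ᵥ x = sInf (spectrum ℝ (cauchyW n lam b)) • x)
    (v : Fin n → ℝ) :
    HasDerivAt (fun t : ℝ => sInf (spectrum ℝ (cauchyW n lam (b + t • v))))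
      (2 * (v ⬝ᵥ cauchyW n lam x *ᵥ b)) 0 := by
  have hx1 : x ⬝ᵥ x = 1 := by simpa only [dotProduct, ← sq] using hx_unit
  have : Nonempty (Fin n) := by
    by_contra hempty
    simp [not_nonempty_iff.mp hempty] at hx_unit
  have hmin := posSemidef_sub_sInf_spectrum (isHermitian_cauchyW (lam := lam) b)
  refine hasDerivAt_sInf_spectrum (fun t => isHermitian_cauchyW _) (by fun_prop)
    (fun t y => hasDerivAt_dotProduct_cauchyW_mulVec_line b v y t)
    (by unfold Function.uncurry; fun_prop) fun y hy1 hy => ?_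
  rw [zero_smul, add_zero] at hy ⊢
  rw [cauchyW_mulVec_eq_of_unit_eigenvectors hpos (sInf_spectrum_cauchyW_nonneg hpos b) hmin
    hx1 hx_eig hy1 hy]

/-- Derivative of the smallest eigenvalue of `W(b)` in a direction `v` tangent to the
sphere: it equals `2 vᵀ W(x) b`, where `x` is a unit eigenvector for the smallest
eigenvalue of `W(b)`. -/
theorem deriv_smallest_eigenvalue (n : ℕ) (hn : 0 < n) (lam : Fin n → ℝ)
    (hpos : ∀ i, 0 < lam i) (hmono : StrictMono lam)
    (b : Fin n → ℝ) (hb_unit : ∑ i, b i ^ 2 = 1) (hb : ∀ i, b i ≠ 0)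
    (x : Fin n → ℝ) (hx_unit : ∑ i, x i ^ 2 = 1)
    (hx_eig : (cauchyW n lam b).mulVec x =
      sInf (spectrum ℝ (cauchyW n lam b)) • x)
    (v : Fin n → ℝ) (hv : v ⬝ᵥ b = 0) :
    HasDerivAt (fun t : ℝ => sInf (spectrum ℝ (cauchyW n lam (b + t • v))))
      (2 * (v ⬝ᵥ (cauchyW n lam x).mulVec b)) 0 :=
  deriv_smallest_eigenvalue_general n lam hpos b x hx_unit hx_eig v
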